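/- arXiv:2405.19239 — 2 statements merged into one kernel-verified Lean document; each statement's English description precedes it below -/
import Mathlib

section
/- Let m, n : ℕ with 2 ≤ m < n, and let y ∈ ℂ⟦T⟧ with ord y = n, such that y is reduced with respect to m (there exists i with coeff_i(y) ≠ 0 and ¬ (m ∣ i)). Set x := T^m, i := (Dx)·(D²y) − (D²x)·(Dy) and v := ((Dx)² + (Dy)²)·((Dx)·(D³y) − (D³x)·(Dy)) + 3·((Dx)·(D²x) + (Dy)·(D²y))·((D²x)·(Dy) − (Dx)·(D²y)). Then the supremum λ over all (B,C) ∈ ℂ² of ord(T^(2m) + y² + 2·B·T^m + 2·C·y) is finite, and ord v + 3 = ord i + λ (an equality in ℕ∞). -/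
open PowerSeries

/-- The formal derivative on `ℂ⟦T⟧`. -/
noncomputable def D : PowerSeries ℂ → PowerSeries ℂ := fun f => PowerSeries.derivative ℂ f

/-- The inflection series of the parametrised curve `(x, y)`: `x'y'' − x''y'`. -/
noncomputable def iser (x y : PowerSeries ℂ) : PowerSeries ℂ :=
  D x * D (D y) - D (D x) * D y

/-- The vertex series of the parametrised curve `(x, y)`:
`v = (x'² + y'²)(x'y''' − x'''y') + 3(x'x'' + y'y'')(x''y' − x'y'')`. -/
noncomputable def vser (x y : PowerSeries ℂ) : PowerSeries ℂ :=
  ((D x) ^ 2 + (D y) ^ 2) * (D x * D (D (D y)) - D (D (D x)) * D y) +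
    3 * (D x * D (D x) + D y * D (D y)) * (D (D x) * D y - D x * D (D y))


lemma D_add' (f g : PowerSeries ℂ) : D (f + g) = D f + D g := by simp [D]
lemma D_sub' (f g : PowerSeries ℂ) : D (f - g) = D f - D g := by simp [D]
lemma D_mul' (f g : PowerSeries ℂ) : D (f * g) = f * D g + g * D f := by
  simp [D, Derivation.leibniz]
lemma D_C' (a : ℂ) : D (C a) = 0 := by
  simp [D, PowerSeries.derivative_C]
lemma C_two' : (C (2 : ℂ) : PowerSeries ℂ) = 2 := map_ofNat _ 2
lemma D_two' : D (2 : PowerSeries ℂ) = 0 := by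
  rw [← C_two', D_C']
lemma D_X' : D (X : PowerSeries ℂ) = 1 := by simp [D, PowerSeries.derivative_X]

lemma X_D_X_pow (m : ℕ) : X * D ((X : PowerSeries ℂ) ^ m) = C (m : ℂ) * X ^ m := by
  induction m with
  | zero => simp [D]
  | succ k ih =>
    rw [pow_succ, D_mul', D_X', mul_add, mul_left_comm, ih]
    push_cast
    rw [map_add, map_one]
    ring

lemma X_D_aux (m : ℕ) (u : PowerSeries ℂ) :
    X * D ((X : PowerSeries ℂ) ^ m * u) = X ^ m * (C (m : ℂ) * u + X * D u) := by
  rw [D_mul', mul_add, mul_left_comm X u, X_D_X_pow]; ring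

lemma expand (f : PowerSeries ℂ) (m : ℕ) (hf : f.order = m) :
    ∃ a : ℂ, a ≠ 0 ∧ ∃ u v w : PowerSeries ℂ,
      X * D f = X ^ m * u ∧ X ^ 2 * D (D f) = X ^ m * v ∧ X ^ 3 * D (D (D f)) = X ^ m * w ∧
      constantCoeff u = m * a ∧ constantCoeff v = m * (m - 1) * a ∧
      constantCoeff w = m * (m - 1) * (m - 2) * a := by
  have hd : (X : PowerSeries ℂ) ^ m ∣ f := by
    apply X_pow_dvd_iff.2
    intro k hk
    apply coeff_of_lt_order
    rw [hf]; exact_mod_cast hk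
  obtain ⟨u, rfl⟩ := hd
  have ha : constantCoeff u ≠ 0 := by
    have h := (order_eq_nat.1 hf).1
    rw [show m = 0 + m by simp, coeff_X_pow_mul'] at h
    simpa using h
  have h1 := X_D_aux m u
  set f := (X : PowerSeries ℂ) ^ m * u with hfdef
  set u1 := C (m : ℂ) * u + X * D u with hu1
  have h2 : X ^ 2 * D (D f) = X ^ m * (C (m : ℂ) * u1 + X * D u1 - u1) := by
    have := X_D_aux m u1
    rw [← h1, D_mul', D_X'] at this
    linear_combination this - h1
  set u2 := C (m : ℂ) * u1 + X * D u1 - u1 with hu2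
  have h3 : X ^ 3 * D (D (D f)) = X ^ m * (C (m : ℂ) * u2 + X * D u2 - 2 * u2) := by
    have := X_D_aux m u2
    rw [← h2, D_mul', pow_two, D_mul' X X, D_X'] at this
    linear_combination this - 2 * h2
  have c1 : constantCoeff u1 = m * constantCoeff u := by simp [hu1]
  have c2 : constantCoeff u2 = m * (m - 1) * constantCoeff u := by
    simp [hu2, c1]; ring
  refine ⟨constantCoeff u, ha, u1, u2, _, h1, h2, h3, c1, c2, ?_⟩
  simp [c2, show constantCoeff (2 : PowerSeries ℂ) = 2 from map_ofNat _ 2]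
  ring

lemma order_of_eq (g w : PowerSeries ℂ) (a N : ℕ) (h : X ^ a * g = X ^ N * w)
    (hw : constantCoeff w ≠ 0) : g.order + a = N := by
  have h0 : w.order = 0 := by
    rw [show (0 : ℕ∞) = ((0 : ℕ) : ℕ∞) from rfl, order_eq_nat]
    exact ⟨by simpa using hw, by simp⟩
  have := congrArg PowerSeries.order h
  rw [order_mul, order_mul, order_X_pow, order_X_pow, h0, add_zero] at this
  rw [add_comm]; exact this

lemma iser_order (x y : PowerSeries ℂ) (m n : ℕ) (hx : x.order = m) (hy : y.order = n)
    (hm : m ≠ 0) (hn : n ≠ 0) (hmn : m ≠ n) : (iser x y).order + 3 = (m + n : ℕ) := by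
  obtain ⟨a, ha, u1, u2, u3, e1, e2, e3, c1, c2, c3⟩ := expand x m hx
  obtain ⟨b, hb, v1, v2, v3, f1, f2, f3, d1, d2, d3⟩ := expand y n hy
  have := order_of_eq (iser x y) (u1 * v2 - u2 * v1) 3 (m + n) (by
    unfold iser
    calc _ = (X * D x) * (X ^ 2 * D (D y)) - (X ^ 2 * D (D x)) * (X * D y) := by ring
      _ = _ := by rw [e1, e2, f1, f2]; ring) (by
    rw [map_sub, map_mul, map_mul, c1, c2, d1, d2]
    have h : (m : ℂ) * n * a * b * (n - m) ≠ 0 := by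
      have : (n : ℂ) - m ≠ 0 := sub_ne_zero.2 (by exact_mod_cast hmn.symm)
      have : (n : ℂ) ≠ 0 := by exact_mod_cast hn
      have : (m : ℂ) ≠ 0 := by exact_mod_cast hm
      positivity
    intro h'; apply h; rw [← h']; ring)
  exact_mod_cast this

/-- Wronskian of the derivatives. -/
noncomputable def wr (x y z : PowerSeries ℂ) : PowerSeries ℂ :=
  D x * (D (D y) * D (D (D z)) - D (D (D y)) * D (D z))
  - D y * (D (D x) * D (D (D z)) - D (D (D x)) * D (D z))
  + D z * (D (D x) * D (D (D y)) - D (D (D x)) * D (D y))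

lemma wr_order (x y z : PowerSeries ℂ) (m n k : ℕ) (hx : x.order = m) (hy : y.order = n)
    (hz : z.order = k)
    (hm : m ≠ 0) (hn : n ≠ 0) (hk : k ≠ 0) (hmn : m ≠ n) (hmk : m ≠ k) (hnk : n ≠ k) :
    (wr x y z).order + 6 = (m + n + k : ℕ) := by
  obtain ⟨a, ha, u1, u2, u3, e1, e2, e3, c1, c2, c3⟩ := expand x m hx
  obtain ⟨b, hb, v1, v2, v3, f1, f2, f3, d1, d2, d3⟩ := expand y n hy
  obtain ⟨c, hc, w1, w2, w3, g1, g2, g3, b1, b2, b3⟩ := expand z k hz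
  have := order_of_eq (wr x y z)
    (u1 * (v2 * w3 - v3 * w2) - v1 * (u2 * w3 - u3 * w2) + w1 * (u2 * v3 - u3 * v2))
    6 (m + n + k) (by
    unfold wr
    calc _ = (X * D x) * ((X ^ 2 * D (D y)) * (X ^ 3 * D (D (D z)))
              - (X ^ 3 * D (D (D y))) * (X ^ 2 * D (D z)))
          - (X * D y) * ((X ^ 2 * D (D x)) * (X ^ 3 * D (D (D z)))
              - (X ^ 3 * D (D (D x))) * (X ^ 2 * D (D z)))
          + (X * D z) * ((X ^ 2 * D (D x)) * (X ^ 3 * D (D (D y)))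
              - (X ^ 3 * D (D (D x))) * (X ^ 2 * D (D y))) := by ring
      _ = _ := by rw [e1, e2, e3, f1, f2, f3, g1, g2, g3]; ring) (by
    simp only [map_sub, map_mul, map_add, c1, c2, c3, d1, d2, d3, b1, b2, b3]
    have h : (m : ℂ) * n * k * a * b * c * (n - m) * (k - m) * (k - n) ≠ 0 := by
      have : (n : ℂ) - m ≠ 0 := sub_ne_zero.2 (by exact_mod_cast hmn.symm)
      have : (k : ℂ) - m ≠ 0 := sub_ne_zero.2 (by exact_mod_cast hmk.symm)
      have : (k : ℂ) - n ≠ 0 := sub_ne_zero.2 (by exact_mod_cast hnk.symm)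
      have : (n : ℂ) ≠ 0 := by exact_mod_cast hn
      have : (m : ℂ) ≠ 0 := by exact_mod_cast hm
      have : (k : ℂ) ≠ 0 := by exact_mod_cast hk
      positivity
    intro h'; apply h; rw [← h']; ring)
  exact_mod_cast this

lemma wr_eq (x y : PowerSeries ℂ) (c : ℂ) :
    wr x y (x * x + y * y + 2 * C c * y) = C (-2) * vser x y := by
  unfold wr vser
  have : (C (-2 : ℂ) : PowerSeries ℂ) = -2 := by rw [map_neg, C_two']
  rw [this]
  simp only [D_add', D_mul', D_two', D_C', mul_zero, add_zero]
  ring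

lemma vser_order (x y : PowerSeries ℂ) (c : ℂ) (m n k : ℕ) (hx : x.order = m) (hy : y.order = n)
    (hz : (x * x + y * y + 2 * C c * y).order = k)
    (hm : m ≠ 0) (hn : n ≠ 0) (hk : k ≠ 0) (hmn : m ≠ n) (hmk : m ≠ k) (hnk : n ≠ k) :
    (vser x y).order + 6 = (m + n + k : ℕ) := by
  have h := wr_order x y _ m n k hx hy hz hm hn hk hmn hmk hnk
  have h0 : (C (-2 : ℂ) : PowerSeries ℂ).order = 0 := by
    rw [show (0 : ℕ∞) = ((0 : ℕ) : ℕ∞) from rfl, order_eq_nat]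
    exact ⟨by simp, by simp⟩
  rwa [wr_eq, order_mul, h0, zero_add] at h

lemma coeff_two_C (c : ℂ) (f : PowerSeries ℂ) (j : ℕ) :
    coeff j (2 * C c * f) = 2 * c * coeff j f := by
  rw [show (2 * C c * f : PowerSeries ℂ) = C (2 * c) * f by rw [map_mul, C_two'], coeff_C_mul]

lemma coeff_lt (f : PowerSeries ℂ) (n j : ℕ) (hf : f.order = n) (h : j < n) : coeff j f = 0 := by
  apply coeff_of_lt_order; rw [hf]; exact_mod_cast h

lemma exists_C (m n : ℕ) (hm : 2 ≤ m) (hmn : m < n)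
    (y : PowerSeries ℂ) (hy : y.order = n)
    (hred : ∃ i, (PowerSeries.coeff i) y ≠ 0 ∧ ¬ m ∣ i) :
    ∃ (c : ℂ) (k : ℕ), ((X : PowerSeries ℂ) ^ (2 * m) + y ^ 2 + 2 * C c * y).order = (k : ℕ∞) ∧
      m < k ∧ n ≠ k := by
  have hy2 : (y ^ 2).order = (2 * n : ℕ) := by
    rw [pow_two, order_mul, hy]; push_cast; ring
  by_cases hn : n = 2 * m
  · have hyn := (order_eq_nat.1 hy).1
    set c : ℂ := - (2 * coeff n y)⁻¹ with hc
    have hc0 : c ≠ 0 := by simp [hc, hyn]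
    set F := ((X : PowerSeries ℂ) ^ (2 * m) + y ^ 2 + 2 * C c * y) with hF
    have hF0 : F ≠ 0 := by
      classical
      intro h0
      obtain ⟨hi, hdi⟩ := Nat.find_spec hred
      set i := Nat.find hred
      have hmin : ∀ j < i, ¬ m ∣ j → coeff j y = 0 := by
        intro j hj hd
        by_contra hne
        exact Nat.find_min hred hj ⟨hne, hd⟩
      have hy0 : coeff 0 y = 0 := coeff_lt y n 0 hy (by omega)
      have hsq : coeff i (y ^ 2) = 0 := by
        rw [pow_two, coeff_mul]
        apply Finset.sum_eq_zero
        rintro ⟨a, b⟩ hab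
        rw [Finset.HasAntidiagonal.mem_antidiagonal] at hab
        dsimp only at hab ⊢
        rcases Nat.eq_zero_or_pos a with rfl | ha
        · rw [hy0, zero_mul]
        rcases Nat.eq_zero_or_pos b with rfl | hb
        · rw [hy0, mul_zero]
        by_cases hda : m ∣ a
        · have : ¬ m ∣ b := fun hdb => hdi (hab ▸ dvd_add hda hdb)
          rw [hmin b (by omega) this, mul_zero]
        · rw [hmin a (by omega) hda, zero_mul]
      have h1 := congrArg (coeff i) h0
      rw [hF, map_add, map_add, hsq, coeff_two_C, coeff_X_pow,
        if_neg (by rintro h; exact hdi (h ▸ Dvd.intro_left 2 rfl))] at h1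
      simp [hc0, hi] at h1
    obtain ⟨k, hk⟩ : ∃ k : ℕ, F.order = k :=
      ⟨F.order.toNat, (ENat.natCast_toNat (by simpa [order_eq_top] using hF0)).symm⟩
    have hlt : ∀ j ≤ n, coeff j F = 0 := by
      intro j hj
      rw [hF, map_add, map_add, coeff_two_C, coeff_lt _ _ j hy2 (by omega), coeff_X_pow]
      rcases hj.lt_or_eq with h | rfl
      · rw [coeff_lt _ _ j hy h, if_neg (by omega)]; simp
      · rw [if_pos hn, hc]; field_simp; ring
    have hkn : n < k := by
      by_contra hle
      exact (order_eq_nat.1 hk).1 (hlt k (by omega))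
    exact ⟨c, k, hk, by omega, by omega⟩
  · refine ⟨0, 2 * m, ?_, by omega, hn⟩
    rw [order_eq_nat]
    constructor
    · rw [map_add, map_add, coeff_two_C, coeff_lt _ _ _ hy2 (by omega), coeff_X_pow]; simp
    · intro j hj
      rw [map_add, map_add, coeff_two_C, coeff_lt _ _ _ hy2 (by omega), coeff_X_pow,
        if_neg (by omega)]; simp

/-- **Theorem 2.6(4).** For a singular parametrised curve germ `γ(t) = (t^m, y(t))`
(with `2 ≤ m < n = ord y` and `y` reduced with respect to `m`), the maximal order of
contact `λ(γ)` of `γ` with complex circles through the origin is finite, and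
`V_γ = I_γ + λ(γ) − 3`. -/
theorem vertex_eq_inflection_add_contact (m n : ℕ) (hm : 2 ≤ m) (hmn : m < n)
    (y : PowerSeries ℂ) (hy : y.order = n)
    (hred : ∃ i, (PowerSeries.coeff i) y ≠ 0 ∧ ¬ m ∣ i) :
    (⨆ p : ℂ × ℂ, ((X : PowerSeries ℂ) ^ (2 * m) + y ^ 2 +
        2 * C p.1 * (X : PowerSeries ℂ) ^ m + 2 * C p.2 * y).order) ≠ ⊤ ∧
    (vser ((X : PowerSeries ℂ) ^ m) y).order + 3
      = (iser ((X : PowerSeries ℂ) ^ m) y).order +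
        ⨆ p : ℂ × ℂ, ((X : PowerSeries ℂ) ^ (2 * m) + y ^ 2 +
          2 * C p.1 * (X : PowerSeries ℂ) ^ m + 2 * C p.2 * y).order := by
  obtain ⟨c, k, hk, hmk, hnk⟩ := exists_C m n hm hmn y hy hred
  have hX : ((X : PowerSeries ℂ) ^ m).order = m := order_X_pow m
  have hsup : (⨆ p : ℂ × ℂ, ((X : PowerSeries ℂ) ^ (2 * m) + y ^ 2 +
        2 * C p.1 * (X : PowerSeries ℂ) ^ m + 2 * C p.2 * y).order) = (k : ℕ∞) := by
    apply le_antisymm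
    · apply iSup_le
      rintro ⟨b, e⟩
      dsimp only
      have hdec : (X : PowerSeries ℂ) ^ (2 * m) + y ^ 2 + 2 * C b * X ^ m + 2 * C e * y
          = (X ^ (2 * m) + y ^ 2 + 2 * C c * y) + 2 * C b * X ^ m + 2 * C (e - c) * y := by
        rw [map_sub]; ring
      rw [hdec]
      have key : ∀ j : ℕ, j ≤ k → coeff j ((X ^ (2 * m) + y ^ 2 + 2 * C c * y) +
          2 * C b * X ^ m + 2 * C (e - c) * y) ≠ 0 → PowerSeries.order
          ((X ^ (2 * m) + y ^ 2 + 2 * C c * y) + 2 * C b * X ^ m + 2 * C (e - c) * y) ≤ k :=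
        fun j hj h => (order_le j h).trans (by exact_mod_cast hj)
      by_cases hb : b = 0
      · by_cases he : e = c
        · subst hb he; simp [hk]
        · have he' := sub_ne_zero.2 he
          rcases lt_or_gt_of_ne hnk with h | h
          · apply key n h.le
            rw [map_add, map_add, coeff_two_C, coeff_two_C, coeff_lt _ _ n hk h]
            simp [hb, he', (order_eq_nat.1 hy).1]
          · apply key k le_rfl
            rw [map_add, map_add, coeff_two_C, coeff_two_C, coeff_lt _ _ k hy h]
            simpa [hb] using (order_eq_nat.1 hk).1
      · apply key m hmk.le
        rw [map_add, map_add, coeff_two_C, coeff_two_C, coeff_lt _ _ m hk hmk,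
          coeff_lt _ _ m hy hmn]
        simp [hb]
    · refine le_trans ?_ (le_iSup _ ((0 : ℂ), c))
      simp [hk]
  rw [hsup]
  refine ⟨ENat.natCast_ne_top k, ?_⟩
  have hi := iser_order _ y m n hX hy (by omega) (by omega) (by omega)
  have hv := vser_order _ y c m n k hX hy
    (by rw [← hk]; congr 1; ring) (by omega) (by omega) (by omega) (by omega) (by omega) hnk
  have : (vser ((X : PowerSeries ℂ) ^ m) y).order + 3 + 3
      = (iser ((X : PowerSeries ℂ) ^ m) y).order + k + 3 := by
    rw [add_assoc, show (3 + 3 : ℕ∞) = 6 by norm_num, hv, add_right_comm _ (k : ℕ∞) 3, hi]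
    push_cast; rfl
  exact (ENat.add_left_injective_of_ne_top (n := 3) (by decide)) this
end

section
/- Let n ≥ 1 and f : Fin n → R := MvPolynomial ℂ (Fin 2), and set F := ∏ i, f i. Assume that for every i the quotient A ⧸ Ideal.span {ι(f i), ι(v_{f i})} is a finite-dimensional ℂ-vector space, and that for all i ≠ j the quotient A ⧸ Ideal.span {ι(f i), ι(f j)} is a finite-dimensional ℂ-vector space. Then A ⧸ Ideal.span {ι F, ι(v_F)} is finite-dimensional and m₀(F, v_F) = (∑ i, m₀(f i, v_{f i})) + 12·(∑_{i < j} m₀(f i, f j)). -/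
open MvPolynomial

noncomputable section

/-- Partial derivative with respect to the first variable `X`. -/
def dx (f : MvPolynomial (Fin 2) ℂ) : MvPolynomial (Fin 2) ℂ := pderiv 0 f

/-- Partial derivative with respect to the second variable `Y`. -/
def dy (f : MvPolynomial (Fin 2) ℂ) : MvPolynomial (Fin 2) ℂ := pderiv 1 f

/-- The inflection polynomial `i_f = f_y²·f_xx − 2·f_x·f_y·f_xy + f_x²·f_yy`. -/
def infl (f : MvPolynomial (Fin 2) ℂ) : MvPolynomial (Fin 2) ℂ :=
  (dy f) ^ 2 * dx (dx f) - 2 * dx f * dy f * dy (dx f) + (dx f) ^ 2 * dy (dy f)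

/-- The vertex polynomial
`v_f = (f_x² + f_y²)(f_x³ f_yyy − 3 f_x² f_y f_xyy + 3 f_x f_y² f_xxy − f_y³ f_xxx)
      − 3((f_x² − f_y²) f_xy − f_x f_y (f_xx − f_yy)) · i_f`. -/
def vert (f : MvPolynomial (Fin 2) ℂ) : MvPolynomial (Fin 2) ℂ :=
  ((dx f) ^ 2 + (dy f) ^ 2) *
      ((dx f) ^ 3 * dy (dy (dy f)) - 3 * (dx f) ^ 2 * dy f * dy (dy (dx f)) +
        3 * dx f * (dy f) ^ 2 * dy (dx (dx f)) - (dy f) ^ 3 * dx (dx (dx f))) -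
    3 * (((dx f) ^ 2 - (dy f) ^ 2) * dy (dx f) - dx f * dy f * (dx (dx f) - dy (dy f))) *
      infl f

/-- The canonical map from polynomials to formal power series in two variables. -/
def ι : MvPolynomial (Fin 2) ℂ →+* MvPowerSeries (Fin 2) ℂ :=
  MvPolynomial.coeToMvPowerSeries.ringHom

/-- The local intersection number at the origin of the curves `g = 0` and `h = 0`:
the `ℂ`-dimension of `ℂ⟦x,y⟧/⟨g,h⟩`. -/
def interMult (g h : MvPolynomial (Fin 2) ℂ) : ℕ :=
  Module.finrank ℂ (MvPowerSeries (Fin 2) ℂ ⧸ Ideal.span {ι g, ι h})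

end
lemma X_pow_mem {I : Ideal (MvPowerSeries (Fin 2) ℂ)}
    [FiniteDimensional ℂ (MvPowerSeries (Fin 2) ℂ ⧸ I)] (s : Fin 2) :
    ∃ N : ℕ, (MvPowerSeries.X s : MvPowerSeries (Fin 2) ℂ) ^ N ∈ I := by
  obtain ⟨p, hp0, hp⟩ := (Algebra.IsIntegral.isIntegral (R := ℂ) (Ideal.Quotient.mk I (MvPowerSeries.X s)))
  rw [← Polynomial.aeval_def] at hp
  obtain ⟨q, hq, hq'⟩ := Polynomial.exists_eq_pow_rootMultiplicity_mul_and_not_dvd p hp0.ne_zero 0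
  refine ⟨p.rootMultiplicity 0, ?_⟩
  have h1 : Polynomial.aeval (MvPowerSeries.X s : MvPowerSeries (Fin 2) ℂ) p ∈ I := by
    rw [← Ideal.Quotient.eq_zero_iff_mem, ← hp]
    exact (Polynomial.aeval_algHom_apply (Ideal.Quotient.mkₐ ℂ I) _ p).symm
  have hu : IsUnit (Polynomial.aeval (MvPowerSeries.X s : MvPowerSeries (Fin 2) ℂ) q) := by
    rw [MvPowerSeries.isUnit_iff_constantCoeff]
    rw [Polynomial.aeval_def, Polynomial.hom_eval₂]
    simp only [map_zero, sub_zero, Polynomial.X_dvd_iff] at hq'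
    simpa [Polynomial.eval₂_at_zero, MvPowerSeries.algebraMap_apply] using hq'
  rw [hq] at h1
  simp only [map_zero, sub_zero, map_mul, map_pow, Polynomial.aeval_X] at h1
  exact (Ideal.mul_unit_mem_iff_mem I hu).1 h1

lemma XY_dvd {M N : ℕ} {w z : MvPowerSeries (Fin 2) ℂ}
   (h : MvPowerSeries.X 1 ^ M * w = MvPowerSeries.X 0 ^ N * z) : MvPowerSeries.X 0 ^ N ∣ w := by
  rw [MvPowerSeries.X_pow_dvd_iff]
  intro m hm
  have h2 := (MvPowerSeries.X_pow_dvd_iff (s := (0 : Fin 2)) (n := N)).1 ⟨z, h⟩ (Finsupp.single 1 M + m) (by simpa using hm)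
  rwa [MvPowerSeries.X_pow_eq, MvPowerSeries.coeff_add_monomial_mul, one_mul] at h2

lemma reg {a b u : MvPowerSeries (Fin 2) ℂ}
    (h : FiniteDimensional ℂ (MvPowerSeries (Fin 2) ℂ ⧸ Ideal.span {a, b}))
    (hu : a ∣ b * u) : a ∣ u := by
  obtain ⟨v, hv⟩ := hu
  obtain ⟨N, hN⟩ := X_pow_mem (I := Ideal.span {a, b}) 0
  obtain ⟨M, hM⟩ := X_pow_mem (I := Ideal.span {a, b}) 1
  rw [Ideal.mem_span_pair] at hN hM
  obtain ⟨p, q, hN⟩ := hN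
  obtain ⟨r, s, hM⟩ := hM
  by_cases ha : a = 0
  · subst ha
    have hb : b ≠ 0 := by
      rintro rfl
      have : (MvPowerSeries.X 0 : MvPowerSeries (Fin 2) ℂ) ^ N = 0 := by rw [← hN]; simp
      have h3 := congrArg (MvPowerSeries.coeff (Finsupp.single (0 : Fin 2) N)) this
      simp [MvPowerSeries.X_pow_eq, MvPowerSeries.coeff_monomial_same] at h3
    simp [hb] at hv
    simp [hv]
  · have h1 : MvPowerSeries.X 1 ^ M * (p * u + q * v) = MvPowerSeries.X 0 ^ N * (r * u + s * v) := by
      apply mul_left_cancel₀ ha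
      rw [← hN, ← hM]
      linear_combination (-(r*a+s*b)*q + (p*a+q*b)*s) * hv
    obtain ⟨w, hw⟩ := XY_dvd h1
    refine ⟨w, ?_⟩
    have hX : (MvPowerSeries.X 0 : MvPowerSeries (Fin 2) ℂ) ^ N ≠ 0 := by
      intro this
      have h3 := congrArg (MvPowerSeries.coeff (Finsupp.single (0 : Fin 2) N)) this
      simp [MvPowerSeries.X_pow_eq, MvPowerSeries.coeff_monomial_same] at h3
    apply mul_left_cancel₀ hX
    linear_combination a * hw - u * hN + q * hv


lemma dx_mul' (p q : MvPolynomial (Fin 2) ℂ) : dx (p * q) = p * dx q + q * dx p := by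
  simp [dx, Derivation.leibniz]
lemma dy_mul' (p q : MvPolynomial (Fin 2) ℂ) : dy (p * q) = p * dy q + q * dy p := by
  simp [dy, Derivation.leibniz]
lemma dx_add' (p q : MvPolynomial (Fin 2) ℂ) : dx (p + q) = dx p + dx q := by simp [dx]
lemma dy_add' (p q : MvPolynomial (Fin 2) ℂ) : dy (p + q) = dy p + dy q := by simp [dy]
lemma dx_sub' (p q : MvPolynomial (Fin 2) ℂ) : dx (p - q) = dx p - dx q := by simp [dx]
lemma dy_sub' (p q : MvPolynomial (Fin 2) ℂ) : dy (p - q) = dy p - dy q := by simp [dy]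
lemma dx_two' : dx 2 = 0 := by
  have : (2 : MvPolynomial (Fin 2) ℂ) = C 2 := (map_ofNat C 2).symm
  rw [this, dx, pderiv_C]
lemma dy_two' : dy 2 = 0 := by
  have : (2 : MvPolynomial (Fin 2) ℂ) = C 2 := (map_ofNat C 2).symm
  rw [this, dy, pderiv_C]
lemma dx_dy (p : MvPolynomial (Fin 2) ℂ) : dx (dy p) = dy (dx p) := by
  have h : (⁅pderiv (R := ℂ) (0 : Fin 2), pderiv (R := ℂ) (1 : Fin 2)⁆ : Derivation ℂ _ _) = 0 := by
    apply MvPolynomial.derivation_ext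
    intro i
    fin_cases i <;> simp [Derivation.commutator_apply, pderiv_X]
  have := congrArg (fun d => d p) h
  simpa [dx, dy, Derivation.commutator_apply, sub_eq_zero] using this

lemma vert_eq (f : MvPolynomial (Fin 2) ℂ) : vert f =
    (dx f ^ 2 + dy f ^ 2) * (dx f * dy (infl f) - dy f * dx (infl f)) -
    3 * (((dx f) ^ 2 - (dy f) ^ 2) * dy (dx f) - dx f * dy f * (dx (dx f) - dy (dy f))) *
      infl f := by
  simp only [vert, infl, pow_two, dx_mul', dy_mul', dx_add', dy_add', dx_sub', dy_sub', dx_dy,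
    dx_two', dy_two']
  ring

lemma of_mk (f p q : MvPolynomial (Fin 2) ℂ)
    (h : Ideal.Quotient.mk (Ideal.span {f}) f = 0 →
      Ideal.Quotient.mk (Ideal.span {f}) p = Ideal.Quotient.mk (Ideal.span {f}) q) :
    ∃ k, p = q + f * k := by
  have h1 := h (Ideal.Quotient.eq_zero_iff_mem.2 (Ideal.mem_span_singleton_self f))
  rw [Ideal.Quotient.eq, Ideal.mem_span_singleton] at h1
  obtain ⟨k, hk⟩ := h1
  exact ⟨k, by linear_combination hk⟩

lemma infl_mul (f g : MvPolynomial (Fin 2) ℂ) :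
    ∃ k, infl (f * g) = g * g * g * infl f + f * k := by
  apply of_mk
  intro h
  simp only [infl, pow_two, dx_mul', dy_mul', dx_add', dy_add', map_add, map_sub, map_mul,
    map_ofNat, h]
  ring

lemma vert_id (f g : MvPolynomial (Fin 2) ℂ) : ∃ k, vert (f * g) = g ^ 6 * vert f + f * k := by
  obtain ⟨k, hk⟩ := infl_mul f g
  apply of_mk
  intro h
  rw [vert_eq, vert_eq, hk]
  simp only [dx_mul', dy_mul', dx_add', dy_add', map_add, map_sub, map_mul, map_pow,
    map_ofNat, h]
  ring

lemma fd_mul {a b c : MvPowerSeries (Fin 2) ℂ}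
    (hb : FiniteDimensional ℂ (MvPowerSeries (Fin 2) ℂ ⧸ Ideal.span {a, b}))
    (hc : FiniteDimensional ℂ (MvPowerSeries (Fin 2) ℂ ⧸ Ideal.span {a, c})) :
    FiniteDimensional ℂ (MvPowerSeries (Fin 2) ℂ ⧸ Ideal.span {a, b * c}) ∧
    Module.finrank ℂ (MvPowerSeries (Fin 2) ℂ ⧸ Ideal.span {a, b * c}) =
    Module.finrank ℂ (MvPowerSeries (Fin 2) ℂ ⧸ Ideal.span {a, b}) +
    Module.finrank ℂ (MvPowerSeries (Fin 2) ℂ ⧸ Ideal.span {a, c}) := by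
  have h1 : Ideal.span {a, b * c} ≤ Ideal.span {a, b} := by
    rw [Ideal.span_le]
    rintro x (rfl | rfl)
    · exact Ideal.subset_span (by simp)
    · exact Ideal.mul_mem_right _ _ (Ideal.subset_span (by simp))
  have h2 : Ideal.span {a, c} ≤
      Submodule.comap (LinearMap.mulLeft (MvPowerSeries (Fin 2) ℂ) b) (Ideal.span {a, b * c}) := by
    intro x hx
    rw [Ideal.mem_span_pair] at hx
    obtain ⟨s, t, rfl⟩ := hx
    rw [Submodule.mem_comap, Ideal.mem_span_pair]
    exact ⟨b * s, t, by simp; ring⟩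
  let φ := (Submodule.mapQ _ _ _ h2).restrictScalars ℂ
  let ψ := (Submodule.factor h1).restrictScalars ℂ
  have hφ : Function.Injective φ := by
    rw [injective_iff_map_eq_zero]
    intro x
    obtain ⟨x, rfl⟩ := Submodule.Quotient.mk_surjective _ x
    intro hx
    have hx' : b * x ∈ Ideal.span {a, b * c} := (Submodule.Quotient.mk_eq_zero _).1 hx
    rw [Ideal.mem_span_pair] at hx'
    obtain ⟨s, t, hst⟩ := hx'
    obtain ⟨w, hw⟩ : a ∣ x - t * c := reg hb ⟨s, by linear_combination -hst⟩
    rw [Submodule.Quotient.mk_eq_zero, Ideal.mem_span_pair]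
    exact ⟨w, t, by linear_combination -hw⟩
  have hψ : Function.Surjective ψ := Submodule.factor_surjective h1
  have hex : Function.Exact φ ψ := by
    intro y
    obtain ⟨y, rfl⟩ := Submodule.Quotient.mk_surjective _ y
    constructor
    · intro hy
      have hy' : y ∈ Ideal.span {a, b} := (Submodule.Quotient.mk_eq_zero _).1 hy
      rw [Ideal.mem_span_pair] at hy'
      obtain ⟨s, t, hst⟩ := hy'
      refine ⟨Submodule.Quotient.mk t, ?_⟩
      refine (Submodule.Quotient.eq _).2 ?_
      rw [Ideal.mem_span_pair]
      exact ⟨-s, 0, by simp; linear_combination -hst⟩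
    · rintro ⟨x, hx⟩
      obtain ⟨x, rfl⟩ := Submodule.Quotient.mk_surjective _ x
      have hx' : b * x - y ∈ Ideal.span {a, b * c} := (Submodule.Quotient.eq _).1 hx
      refine (Submodule.Quotient.mk_eq_zero _).2 ?_
      have := h1 hx'
      have h3 : b * x ∈ Ideal.span {a, b} := Ideal.mul_mem_right _ _ (Ideal.subset_span (by simp))
      simpa using sub_mem h3 this
  have hfin : FiniteDimensional ℂ (MvPowerSeries (Fin 2) ℂ ⧸ Ideal.span {a, b * c}) :=
    Module.Finite.of_exact hex hψ
  refine ⟨hfin, ?_⟩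
  have e1 := ψ.finrank_range_add_finrank_ker
  rw [hex.linearMap_ker_eq, LinearMap.finrank_range_of_inj hφ,
    LinearMap.range_eq_top.2 hψ, finrank_top] at e1
  exact e1.symm

def FD (a b : MvPolynomial (Fin 2) ℂ) : Prop :=
  FiniteDimensional ℂ (MvPowerSeries (Fin 2) ℂ ⧸ Ideal.span {ι a, ι b})

lemma FD.symm {a b : MvPolynomial (Fin 2) ℂ} (h : FD a b) : FD b a := by
  unfold FD at *
  rwa [Set.pair_comm]

lemma im_symm (a b : MvPolynomial (Fin 2) ℂ) : interMult a b = interMult b a := by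
  unfold interMult
  rw [Set.pair_comm]

lemma FD.mul {a b c : MvPolynomial (Fin 2) ℂ} (hb : FD a b) (hc : FD a c) : FD a (b * c) := by
  unfold FD at *
  rw [map_mul]
  exact (fd_mul hb hc).1

lemma im_mul {a b c : MvPolynomial (Fin 2) ℂ} (hb : FD a b) (hc : FD a c) :
    interMult a (b * c) = interMult a b + interMult a c := by
  unfold interMult
  rw [map_mul]
  exact (fd_mul hb hc).2

lemma FD_one (a : MvPolynomial (Fin 2) ℂ) : FD a 1 ∧ interMult a 1 = 0 := by
  have h : Ideal.span {ι a, ι 1} = ⊤ := by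
    rw [Ideal.eq_top_iff_one]
    exact Ideal.subset_span (by simp)
  unfold FD interMult
  rw [h]
  have : Subsingleton (MvPowerSeries (Fin 2) ℂ ⧸ (⊤ : Ideal (MvPowerSeries (Fin 2) ℂ))) :=
    Ideal.Quotient.subsingleton_iff.2 rfl
  exact ⟨inferInstance, Module.finrank_zero_of_subsingleton⟩

lemma im_prod {α : Type*} (s : Finset α) (a : MvPolynomial (Fin 2) ℂ)
    (b : α → MvPolynomial (Fin 2) ℂ) (h : ∀ i ∈ s, FD a (b i)) :
    FD a (∏ i ∈ s, b i) ∧ interMult a (∏ i ∈ s, b i) = ∑ i ∈ s, interMult a (b i) := by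
  classical
  induction s using Finset.induction_on with
  | empty => simpa using FD_one a
  | insert i s hi ih =>
    have ih := ih (fun j hj => h j (by simp [hj]))
    have h0 := h i (by simp)
    rw [Finset.prod_insert hi, Finset.sum_insert hi, ← ih.2]
    exact ⟨h0.mul ih.1, im_mul h0 ih.1⟩

lemma span_congr (a b k : MvPolynomial (Fin 2) ℂ) :
    Ideal.span {ι a, ι (b + a * k)} = Ideal.span {ι a, ι b} := by
  rw [map_add, map_mul, mul_comm (ι a), Ideal.span_pair_add_mul_left]

lemma aux_i {n : ℕ} (f : Fin n → MvPolynomial (Fin 2) ℂ)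
    (hV : ∀ i, FD (f i) (vert (f i))) (hm : ∀ i j, i ≠ j → FD (f i) (f j)) (i : Fin n) :
    FD (f i) (vert (∏ i, f i)) ∧ interMult (f i) (vert (∏ i, f i)) =
      interMult (f i) (vert (f i)) + 6 * ∑ j ∈ Finset.univ.erase i, interMult (f i) (f j) := by
  have hp := im_prod (Finset.univ.erase i) (f i) f (fun j hj => hm i j (Finset.ne_of_mem_erase hj).symm)
  have h6 := im_prod (Finset.range 6) (f i) (fun _ => ∏ j ∈ Finset.univ.erase i, f j) (fun _ _ => hp.1)
  rw [← Finset.mul_prod_erase Finset.univ f (Finset.mem_univ i)]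
  obtain ⟨k, hk⟩ := vert_id (f i) (∏ j ∈ Finset.univ.erase i, f j)
  simp only [Finset.prod_const, Finset.card_range, Finset.sum_const, smul_eq_mul, hp.2] at h6
  rw [hk]
  have h7 := h6.1.mul (hV i)
  have h8 := im_mul h6.1 (hV i)
  unfold FD interMult at *
  rw [span_congr]
  refine ⟨h7, ?_⟩
  rw [h8, h6.2, add_comm]

lemma sum_sym {n : ℕ} (m : Fin n → Fin n → ℕ) (hs : ∀ i j, m i j = m j i) :
    ∑ i, ∑ j ∈ Finset.univ.erase i, m i j =
      2 * ∑ i, ∑ j ∈ Finset.univ.filter (fun j => i < j), m i j := by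
  have h1 : ∀ i, ∑ j ∈ Finset.univ.erase i, m i j =
      ∑ j ∈ Finset.univ.filter (fun j => i < j), m i j +
      ∑ j ∈ Finset.univ.filter (fun j => j < i), m i j := by
    intro i
    rw [← Finset.sum_union]
    · congr 1
      ext j
      simp [eq_comm, lt_or_lt_iff_ne]
    · rw [Finset.disjoint_filter]
      intro j _ h
      exact h.asymm
  rw [Finset.sum_congr rfl (fun i _ => h1 i), Finset.sum_add_distrib, two_mul]
  congr 1
  rw [Finset.sum_comm' (t' := Finset.univ) (s' := fun j => Finset.univ.filter (fun i => j < i))]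
  · exact Finset.sum_congr rfl fun i _ => Finset.sum_congr rfl fun j _ => hs _ _
  · simp

/-- **Theorem 3.3 (vertex part).** If `F = f₁ ⋯ f_n` where each `V_{f_i}` is finite
and the pairwise intersection numbers `m₀(f_i, f_j)` are finite, then `V_F` is finite
and `V_F = Σᵢ V_{f_i} + 12·Σ_{i<j} m₀(f_i, f_j)`. -/
theorem vertex_number_of_product
    (n : ℕ) (hn : 1 ≤ n) (f : Fin n → MvPolynomial (Fin 2) ℂ)
    (hV : ∀ i, FiniteDimensional ℂ
      (MvPowerSeries (Fin 2) ℂ ⧸ Ideal.span {ι (f i), ι (vert (f i))}))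
    (hm : ∀ i j, i ≠ j → FiniteDimensional ℂ
      (MvPowerSeries (Fin 2) ℂ ⧸ Ideal.span {ι (f i), ι (f j)})) :
    FiniteDimensional ℂ (MvPowerSeries (Fin 2) ℂ ⧸
        Ideal.span {ι (∏ i, f i), ι (vert (∏ i, f i))}) ∧
    interMult (∏ i, f i) (vert (∏ i, f i))
      = (∑ i, interMult (f i) (vert (f i)))
        + 12 * ∑ i, ∑ j ∈ Finset.univ.filter (fun j => i < j), interMult (f i) (f j) := by
  have hi := aux_i f hV hm
  have hp := im_prod Finset.univ (vert (∏ i, f i)) f (fun i _ => (hi i).1.symm)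
  refine ⟨hp.1.symm, ?_⟩
  rw [im_symm, hp.2, Finset.sum_congr rfl (fun i _ => (im_symm _ _).trans (hi i).2),
    Finset.sum_add_distrib, ← Finset.mul_sum, sum_sym _ (fun i j => im_symm _ _), ← mul_assoc]
  norm_num
end
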